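/- Let X be a finite set with n ≥ 1 elements and fix x₀ ∈ X. Let F be the free Abelian group ℤ^(X\{x₀}), regarded as a heap with [x,y,z] = x − y + z, and let ι : X → F send x₀ to 0 and each y ≠ x₀ to the corresponding standard basis element. Then (F, ι) is the free Abelian heap on X: for every Abelian heap H and every function φ : X → H there exists a unique heap morphism ψ : F → H with ψ ∘ ι = φ. In particular, the free Abelian heap on an n-element set is isomorphic to the heap H(ℤ^(n−1)). -/

import Mathlib

/-- A ternary operation is a heap operation if it is associative and
satisfies the Mal'cev identities. -/
def IsHeap {H : Type*} (op : H → H → H → H) : Prop :=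
  (∀ a b c d e : H, op (op a b c) d e = op a b (op c d e)) ∧
  (∀ a b : H, op a b b = a) ∧ (∀ a b : H, op b b a = a)

/-- An Abelian heap is a heap whose ternary operation satisfies
`[a,b,c] = [c,b,a]`. -/
def IsAbelianHeap {H : Type*} (op : H → H → H → H) : Prop :=
  IsHeap op ∧ ∀ a b c : H, op a b c = op c b a

/-!
Based at a point `e`, an Abelian heap `H` becomes an Abelian group with zero `e` whose heap
`[x,y,z] = x - y + z` is the given one, and a heap morphism between groups that preserves zero is a
group homomorphism. Take `e = φ x₀`: heap morphisms `F → H` extending `φ` send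
`0 = ι x₀` to `e`, so they are the group homomorphisms with prescribed values on a basis of `F`.
-/

open Module

/-- The operation `[x,y,z] = x - y + z` of the heap `H(G)` of a group `G`. -/
def groupHeap {G : Type*} [AddGroup G] (x y z : G) : G := x - y + z

/-- Heap morphisms. As with `IsHeap`, the operations are explicit and the property is kept separate
from the underlying map. -/
def IsHeapHom {A B : Type*} (opA : A → A → A → A) (opB : B → B → B → B) (f : A → B) : Prop :=
  ∀ a b c : A, f (opA a b c) = opB (f a) (f b) (f c)

namespace IsHeap

variable {H : Type*} {op : H → H → H → H}

theorem op_assoc (hop : IsHeap op) (a b c d e : H) : op (op a b c) d e = op a b (op c d e) :=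
  hop.1 a b c d e

theorem op_self_right (hop : IsHeap op) (a b : H) : op a b b = a := hop.2.1 a b

theorem op_self_left (hop : IsHeap op) (a b : H) : op b b a = a := hop.2.2 a b

/-- The retract of a heap at a point `e`: the group, written additively, with zero `e`, addition
`a + b = [a,e,b]` and negation `-a = [e,a,e]`. -/
abbrev retract (hop : IsHeap op) (e : H) : AddGroup H :=
  letI : Zero H := ⟨e⟩
  letI : Add H := ⟨fun a b => op a e b⟩
  letI : Neg H := ⟨fun a => op e a e⟩
  { add_assoc a b c := hop.op_assoc a e b e c
    zero_add a := hop.op_self_left a e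
    add_zero a := hop.op_self_right a e
    neg_add_cancel a := by
      change op (op e a e) e a = e
      rw [hop.op_assoc, hop.op_self_left, hop.op_self_right]
    nsmul := nsmulRec
    zsmul := zsmulRec }

theorem groupHeap_retract (hop : IsHeap op) (e : H) :
    letI := hop.retract e
    groupHeap = op := by
  funext a b c
  change op (op a e (op e b e)) e c = op a b c
  calc
    op (op a e (op e b e)) e c = op (op a b e) e c := by rw [← hop.op_assoc, hop.op_self_right]
    _ = op a b c := by rw [hop.op_assoc, hop.op_self_left]

end IsHeap

/-- The retract of an Abelian heap at a point, as an Abelian group. -/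
abbrev IsAbelianHeap.retract {H : Type*} {op : H → H → H → H} (hop : IsAbelianHeap op) (e : H) :
    AddCommGroup H :=
  { hop.1.retract e with add_comm a b := hop.2 a e b }

theorem IsHeapHom.of_addMonoidHom {A B : Type*} [AddGroup A] [AddGroup B] (f : A →+ B) :
    IsHeapHom groupHeap groupHeap f := fun a b c => by
  simp only [groupHeap, map_add, map_sub]

/-- A morphism `H(A) → H(B)` that preserves zero, as a group homomorphism. -/
def IsHeapHom.toAddMonoidHom {A B : Type*} [AddGroup A] [AddGroup B] {f : A → B}
    (hf : IsHeapHom groupHeap groupHeap f) (f_zero : f 0 = 0) : A →+ B where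
  toFun := f
  map_zero' := f_zero
  map_add' a b := by simpa only [groupHeap, sub_zero, f_zero] using hf a 0 b

section BasedFamily

variable {X F : Type*} [DecidableEq X] [AddCommGroup F] {x₀ : X}

/-- The map `ι : X → F` that extends a basis of `F` indexed by `X \ {x₀}` by sending `x₀`
to `0`. -/
noncomputable def basedFamily (b : Basis {y : X // y ≠ x₀} ℤ F) (x : X) : F :=
  if h : x = x₀ then 0 else b ⟨x, h⟩

variable (b : Basis {y : X // y ≠ x₀} ℤ F)

theorem basedFamily_self : basedFamily b x₀ = 0 := dif_pos rfl

theorem basedFamily_coe (y : {y : X // y ≠ x₀}) : basedFamily b y = b y := dif_neg y.2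

theorem map_basedFamily_eq_iff {G : Type*} [Zero G] {φ : X → G} (hφ : φ x₀ = 0) {ψ : F → G} :
    (∀ x, ψ (basedFamily b x) = φ x) ↔ ψ 0 = 0 ∧ ∀ y, ψ (b y) = φ y := by
  constructor
  · intro h
    exact ⟨by rw [← basedFamily_self b, h, hφ], fun y => by rw [← basedFamily_coe, h]⟩
  · rintro ⟨ψ_zero, ψ_basis⟩ x
    obtain rfl | hx := eq_or_ne x x₀
    · rw [basedFamily_self, ψ_zero, hφ]
    · exact (congrArg ψ (basedFamily_coe b ⟨x, hx⟩)).trans (ψ_basis ⟨x, hx⟩)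

theorem existsUnique_isHeapHom_groupHeap {G : Type*} [AddCommGroup G] {φ : X → G}
    (hφ : φ x₀ = 0) :
    ∃! ψ : F → G, IsHeapHom groupHeap groupHeap ψ ∧ ∀ x, ψ (basedFamily b x) = φ x := by
  simp only [map_basedFamily_eq_iff b hφ]
  let extension : F →ₗ[ℤ] G := b.constr ℤ fun y => φ y
  have extension_basis (y) : extension (b y) = φ y := b.constr_basis ℤ _ y
  refine ⟨extension, ⟨IsHeapHom.of_addMonoidHom extension.toAddMonoidHom, map_zero extension,
    extension_basis⟩, ?_⟩
  rintro ψ ⟨hψ, ψ_zero, ψ_basis⟩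
  have linear_eq : (hψ.toAddMonoidHom ψ_zero).toIntLinearMap = extension :=
    b.ext fun y => (ψ_basis y).trans (extension_basis y).symm
  exact congrArg DFunLike.coe linear_eq

theorem IsAbelianHeap.existsUnique_isHeapHom {H : Type*} {op : H → H → H → H}
    (hop : IsAbelianHeap op) (φ : X → H) :
    ∃! ψ : F → H, IsHeapHom groupHeap op ψ ∧ ∀ x, ψ (basedFamily b x) = φ x := by
  let := hop.retract (φ x₀)
  have φ_base : φ x₀ = 0 := rfl
  simpa only [hop.1.groupHeap_retract] using existsUnique_isHeapHom_groupHeap b φ_base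

end BasedFamily

theorem nonempty_subtype_ne_equiv_fin {X : Type*} {n : ℕ} (hcard : Nat.card X = n + 1) (x₀ : X) :
    Nonempty ({y : X // y ≠ x₀} ≃ Fin n) := by
  classical
  have : Finite X := Nat.finite_of_card_ne_zero (by lia)
  have card_ne : Nat.card {y : X // y ≠ x₀} + 1 = n + 1 := by
    rw [← Finite.card_option, Nat.card_congr (Equiv.optionSubtypeNe x₀), hcard]
  exact ⟨Finite.equivFinOfCardEq (Nat.succ_injective card_ne)⟩

theorem exists_equiv_isHeapHom_of_basis {κ ν F : Type*} [Finite ν] [AddCommGroup F]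
    (b : Basis κ ℤ F) (e : κ ≃ ν) :
    ∃ eqv : F ≃ (ν → ℤ), IsHeapHom groupHeap groupHeap eqv :=
  let coordinates := (b.reindex e).equivFun
  ⟨coordinates.toEquiv, IsHeapHom.of_addMonoidHom coordinates.toAddEquiv.toAddMonoidHom⟩

theorem free_abelian_heap_general.{u, v, w} {X : Type u} {F : Type v} [DecidableEq X]
    [AddCommGroup F] {x₀ : X} (b : Basis {y : X // y ≠ x₀} ℤ F) :
    (∀ (H : Type w) (op : H → H → H → H), IsAbelianHeap op → ∀ φ : X → H,
      ∃! ψ : F → H, IsHeapHom groupHeap op ψ ∧ ∀ x, ψ (basedFamily b x) = φ x) ∧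
    ∀ n : ℕ, Nat.card X = n + 1 →
      ∃ eqv : F ≃ (Fin n → ℤ), IsHeapHom groupHeap groupHeap eqv :=
  ⟨fun _ _ hop φ => hop.existsUnique_isHeapHom b φ, fun _ hcard =>
    (nonempty_subtype_ne_equiv_fin hcard x₀).elim (exists_equiv_isHeapHom_of_basis b)⟩

/-- Let `X` be a finite set with `n ≥ 1` elements and fix
`x₀ ∈ X`.  Let `F = ℤ^(X\{x₀})`, regarded as a heap with `[x,y,z] = x - y + z`,
and let `ι : X → F` send `x₀` to `0` and each `y ≠ x₀` to the corresponding
standard basis vector.  Then `(F, ι)` is the free Abelian heap on `X`, and in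
particular the free Abelian heap on an `n`-element set is isomorphic to the
heap `H(ℤ^(n-1))`. -/
theorem free_abelian_heap {X : Type} [Fintype X] [DecidableEq X]
    (n : ℕ) (hn : 1 ≤ n) (hcard : Fintype.card X = n) (x₀ : X) :
    (∀ (H : Type) (op : H → H → H → H), IsAbelianHeap op →
      ∀ φ : X → H, ∃! ψ : ({y : X // y ≠ x₀} → ℤ) → H,
        (∀ a b c : {y : X // y ≠ x₀} → ℤ, ψ (a - b + c) = op (ψ a) (ψ b) (ψ c)) ∧
        (∀ x : X, ψ (if h : x = x₀ then 0 else Pi.single ⟨x, h⟩ 1) = φ x)) ∧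
    ∃ eqv : ({y : X // y ≠ x₀} → ℤ) ≃ (Fin (n - 1) → ℤ),
      ∀ a b c : {y : X // y ≠ x₀} → ℤ, eqv (a - b + c) = eqv a - eqv b + eqv c := by
  have ⟨universal, rank⟩ := free_abelian_heap_general (Pi.basisFun ℤ {y : X // y ≠ x₀})
  simp only [basedFamily, Pi.basisFun_apply] at universal
  exact ⟨universal, rank (n - 1) (by rw [Nat.card_eq_fintype_card, hcard, Nat.sub_add_cancel hn])⟩
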